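/- arXiv:1909.09723 — 3 statements merged into one kernel-verified Lean document; each statement's English description precedes it below -/
import Mathlib

section
/- Let S be a semitopological semigroup. Then S has property (D) if and only if S has property (E). Here property (D) means: every Q-nonexpansive dynamical system (S,(K,τ)), where K is a compact convex subset of a Hausdorff locally convex space (X,τ) whose topology is determined by a family Q of seminorms, has a point x ∈ K with sx = x for all s ∈ S; and property (E) means: every Q-nonexpansive dynamical system (S,(K,weak)), where K is a weakly compact convex subset of such a space and the translations λ_s: K → K are equicontinuous in the weak topology, has a point x ∈ K with sx = x for all s ∈ S. -/
open Set MeasureTheory BoundedContinuousFunction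

noncomputable section

universe u v

/-- The weak topology on a topological module `X` over `𝕜`: the coarsest topology making all
continuous linear functionals continuous. -/
def weakTop (𝕜 : Type*) (X : Type*) [NontriviallyNormedField 𝕜] [AddCommGroup X]
    [Module 𝕜 X] [TopologicalSpace X] : TopologicalSpace X :=
  ⨅ f : X →L[𝕜] 𝕜, TopologicalSpace.induced (⇑f) inferInstance

/-- A semitopological semigroup: multiplication is separately continuous. -/
def IsSemitopologicalSemigroup (S : Type*) [Semigroup S] [TopologicalSpace S] : Prop :=
  (∀ t : S, Continuous fun s => t * s) ∧ (∀ t : S, Continuous fun s => s * t)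


/-- Property (E): every `Q`-nonexpansive dynamical system `(S,(K,weak))` on a nonempty weakly
compact convex subset of a Hausdorff locally convex space, whose translations are equicontinuous
in the weak topology, has a common fixed point. -/
def PropertyE (S : Type u) [Semigroup S] [TopologicalSpace S] : Prop :=
  ∀ (X : Type v) [AddCommGroup X] [Module ℝ X] [TopologicalSpace X] [T2Space X]
    (ι : Type v) [Nonempty ι] (Q : SeminormFamily ℝ X ι), WithSeminorms Q →
    ∀ (K : Set X) (π : S → X → X),
      K.Nonempty → Convex ℝ K → @IsCompact X (weakTop ℝ X) K →
      (∀ s : S, MapsTo (π s) K K) →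
      (∀ s t : S, ∀ x ∈ K, π (s * t) x = π s (π t x)) →
      -- the action is separately continuous when `K` carries the weak topology
      (∀ x ∈ K, @Continuous S X _ (weakTop ℝ X) fun s => π s x) →
      (∀ s : S, @ContinuousOn X X (weakTop ℝ X) (weakTop ℝ X) (π s) K) →
      -- the action is `Q`-nonexpansive
      (∀ (i : ι) (s : S), ∀ x ∈ K, ∀ y ∈ K, Q i (π s x - π s y) ≤ Q i (x - y)) →
      -- the translations `λ_s` are equicontinuous in the weak topology
      (∀ x ∈ K, ∀ V ∈ @nhds X (weakTop ℝ X) 0,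
        ∃ U ∈ @nhds X (weakTop ℝ X) x, ∀ s : S, ∀ y ∈ U ∩ K, π s y - π s x ∈ V) →
      ∃ x ∈ K, ∀ s : S, π s x = x

/-- Property (D): every `Q`-nonexpansive dynamical system `(S,(K,τ))` on a nonempty compact
convex subset of a Hausdorff locally convex space (with its original topology `τ`) has a common
fixed point. -/
def PropertyD (S : Type u) [Semigroup S] [TopologicalSpace S] : Prop :=
  ∀ (X : Type v) [AddCommGroup X] [Module ℝ X] [TopologicalSpace X] [T2Space X]
    (ι : Type v) [Nonempty ι] (Q : SeminormFamily ℝ X ι), WithSeminorms Q →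
    ∀ (K : Set X) (π : S → X → X),
      K.Nonempty → Convex ℝ K → IsCompact K →
      (∀ s : S, MapsTo (π s) K K) →
      (∀ s t : S, ∀ x ∈ K, π (s * t) x = π s (π t x)) →
      -- the action is separately continuous when `K` carries the topology `τ`
      (∀ x ∈ K, Continuous fun s => π s x) →
      (∀ s : S, ContinuousOn (π s) K) →
      -- the action is `Q`-nonexpansive
      (∀ (i : ι) (s : S), ∀ x ∈ K, ∀ y ∈ K, Q i (π s x - π s y) ≤ Q i (x - y)) →
      ∃ x ∈ K, ∀ s : S, π s x = x


open Filter Topology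

def EquiAct (M Y : Type*) [TopologicalSpace Y] [Monoid M] [MulAction M Y] : Prop :=
  ∀ g : C(Y, ℝ), Equicontinuous fun (m : M) (y : Y) => g (m • y)

def dd (M : Type*) {Y : Type*} [TopologicalSpace Y] [Monoid M] [MulAction M Y]
    (g : C(Y, ℝ)) (x y : Y) : ℝ := ⨆ m : M, |g (m • x) - g (m • y)|

section dyn
variable {M Y : Type*} [TopologicalSpace Y] [CompactSpace Y] [Monoid M] [MulAction M Y]

lemma dd_bdd (g : C(Y, ℝ)) (x y : Y) :
    BddAbove (range fun m : M => |g (m • x) - g (m • y)|) := by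
  refine ⟨‖g‖ + ‖g‖, ?_⟩
  rintro _ ⟨m, rfl⟩
  have h1 := g.norm_coe_le_norm (m • x)
  have h2 := g.norm_coe_le_norm (m • y)
  rw [Real.norm_eq_abs] at h1 h2
  exact (abs_sub _ _).trans (add_le_add h1 h2)

lemma le_dd (g : C(Y, ℝ)) (x y : Y) (m : M) : |g (m • x) - g (m • y)| ≤ dd M g x y :=
  le_ciSup (dd_bdd (M := M) g x y) m

lemma le_dd_one (g : C(Y, ℝ)) (x y : Y) : |g x - g y| ≤ dd M g x y := by
  simpa using le_dd (M := M) g x y 1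

omit [CompactSpace Y] in
lemma dd_le (g : C(Y, ℝ)) (x y : Y) {c : ℝ} (h : ∀ m : M, |g (m • x) - g (m • y)| ≤ c) :
    dd M g x y ≤ c := ciSup_le h

omit [CompactSpace Y] in
lemma dd_comm (g : C(Y, ℝ)) (x y : Y) : dd M g x y = dd M g y x := by
  simp only [dd, abs_sub_comm]

lemma dd_tri (g : C(Y, ℝ)) (x y z : Y) : dd M g x z ≤ dd M g x y + dd M g y z := by
  refine dd_le g x z fun m => ?_
  have := abs_sub_le (g (m • x)) (g (m • y)) (g (m • z))
  linarith [le_dd (M := M) g x y m, le_dd (M := M) g y z m]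

lemma dd_smul_le (g : C(Y, ℝ)) (x y : Y) (m : M) : dd M g (m • x) (m • y) ≤ dd M g x y := by
  refine dd_le g _ _ fun k => ?_
  simpa [mul_smul] using le_dd (M := M) g x y (k * m)

omit [CompactSpace Y] in
lemma dd_nhds (hE : EquiAct M Y) (g : C(Y, ℝ)) (x : Y) {δ : ℝ} (hδ : 0 < δ) :
    ∀ᶠ y in 𝓝 x, dd M g x y < δ := by
  have := Metric.equicontinuousAt_iff_right.1 (hE g x) (δ / 2) (by linarith)
  filter_upwards [this] with y hy
  refine lt_of_le_of_lt (dd_le g x y (c := δ / 2) fun m => ?_) (by linarith)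
  have := (hy m).le
  rwa [Real.dist_eq] at this

/-- pigeonhole -/
lemma pigeon (hE : EquiAct M Y) (g : C(Y, ℝ)) {δ : ℝ} (hδ : 0 < δ) (x y : ℕ → Y) :
    ∃ n k : ℕ, n < k ∧ dd M g (x n) (x k) < δ ∧ dd M g (y n) (y k) < δ := by
  obtain ⟨t, -, ht⟩ := (isCompact_univ (X := Y)).elim_nhds_subcover
    (fun x => {y | dd M g x y < δ / 2}) (fun x _ => dd_nhds hE g x (by linarith))
  have hc : ∀ z : Y, ∃ c : t, dd M g c z < δ / 2 := by
    intro z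
    have := ht (mem_univ z)
    simp only [mem_iUnion] at this
    obtain ⟨c, hc, h⟩ := this
    exact ⟨⟨c, hc⟩, h⟩
  choose c hc using hc
  obtain ⟨n, k, hnk, he⟩ := Finite.exists_ne_map_eq_of_infinite (fun n : ℕ => (c (x n), c (y n)))
  have key : ∀ n k : ℕ, (c (x n), c (y n)) = (c (x k), c (y k)) →
      dd M g (x n) (x k) < δ ∧ dd M g (y n) (y k) < δ := by
    intro n k he
    have h1 := congrArg Prod.fst he
    have h2 := congrArg Prod.snd he
    simp only at h1 h2
    have a1 := hc (x n)
    have a2 := hc (x k)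
    have b1 := hc (y n)
    have b2 := hc (y k)
    rw [h1] at a1
    rw [h2] at b1
    have := dd_tri (M := M) g (x n) (c (x k)) (x k)
    have := dd_tri (M := M) g (y n) (c (y k)) (y k)
    rw [dd_comm] at a1 b1
    constructor <;> linarith
  rcases lt_or_gt_of_ne hnk with h | h
  · exact ⟨n, k, h, key n k he⟩
  · exact ⟨k, n, h, key k n he.symm⟩

/-- surjective nonexpansive maps on compact spaces are isometric -/
lemma dd_isom (hE : EquiAct M Y) (hs : ∀ m : M, Function.Surjective fun y : Y => m • y)
    (g : C(Y, ℝ)) (x y : Y) (m : M) : dd M g (m • x) (m • y) = dd M g x y := by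
  refine le_antisymm (dd_smul_le g x y m) ?_
  refine le_of_forall_pos_le_add fun δ hδ => ?_
  choose r hr using hs m
  have hr : ∀ y, m • r y = y := hr
  set u : ℕ → Y := fun n => r^[n] x
  set v : ℕ → Y := fun n => r^[n] y
  have hit : ∀ (z : Y) (n j : ℕ), m ^ n • r^[n + j] z = r^[j] z := by
    intro z n j
    induction n with
    | zero => simp
    | succ n ih => rw [pow_succ, mul_smul, Nat.add_right_comm, Function.iterate_succ_apply', hr, ih]
  obtain ⟨n, k, hnk, h1, h2⟩ := pigeon (M := M) hE g (δ := δ / 2) (by linarith) u v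
  obtain ⟨j, rfl⟩ := Nat.exists_eq_add_of_lt hnk
  have e : ∀ z : Y, m ^ (n + 1) • r^[n] z = m • z := by
    intro z
    have := hit z n 0
    simp only [add_zero, Function.iterate_zero, id] at this
    rw [pow_succ', mul_smul, this]
  have e' : ∀ z : Y, m ^ (n + 1) • r^[n + j + 1] z = r^[j] z := by
    intro z
    rw [Nat.add_right_comm]
    exact hit z (n + 1) j
  have a1 := dd_smul_le (M := M) g (u n) (u (n + j + 1)) (m ^ (n + 1))
  have a2 := dd_smul_le (M := M) g (v n) (v (n + j + 1)) (m ^ (n + 1))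
  simp only [u, v, e, e'] at a1 a2
  have a3 := dd_smul_le (M := M) g (r^[j] x) (r^[j] y) (m ^ j)
  have f : ∀ z : Y, m ^ j • r^[j] z = z := fun z => by simpa using hit z j 0
  rw [f, f] at a3
  have t1 := dd_tri (M := M) g (r^[j] x) (m • x) (r^[j] y)
  have t2 := dd_tri (M := M) g (m • x) (m • y) (r^[j] y)
  rw [dd_comm g (r^[j] x) (m • x)] at t1
  linarith

lemma exists_bump [T2Space Y] (x : Y) {U : Set Y} (hU : U ∈ 𝓝 x) :
    ∃ g : C(Y, ℝ), ∀ y, dd M g x y < 1 → y ∈ U := by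
  obtain ⟨f, h0, h1, -⟩ := exists_continuous_zero_one_of_isClosed (isClosed_singleton (x := x))
    (isOpen_interior (s := U)).isClosed_compl
    (by simpa using mem_interior_iff_mem_nhds.2 hU)
  refine ⟨f, fun y hy => ?_⟩
  by_contra hyU
  have : y ∈ (interior U)ᶜ := fun h => hyU (interior_subset h)
  have h2 := le_dd_one (M := M) f x y
  rw [h1 this, h0 rfl] at h2
  norm_num at h2
  linarith

lemma recur (hE : EquiAct M Y) (hs : ∀ m : M, Function.Surjective fun y : Y => m • y)
    (g : C(Y, ℝ)) {δ : ℝ} (hδ : 0 < δ) (x : Y) (m : M) :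
    ∃ n : ℕ, dd M g x (m ^ (n + 1) • x) < δ := by
  obtain ⟨n, k, hnk, h1, -⟩ := pigeon (M := M) hE g hδ (fun n => m ^ n • x) (fun n => m ^ n • x)
  obtain ⟨j, rfl⟩ := Nat.exists_eq_add_of_lt hnk
  refine ⟨j, ?_⟩
  rw [add_assoc, pow_add, mul_smul, dd_isom hE hs] at h1
  exact h1

lemma surj_on_closed [T2Space Y] [ContinuousConstSMul M Y] (hE : EquiAct M Y)
    (hs : ∀ m : M, Function.Surjective fun y : Y => m • y)
    {Z : Set Y} (hZ : IsClosed Z) {m : M} (hm : ∀ z ∈ Z, m • z ∈ Z) {z : Y} (hz : z ∈ Z) :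
    ∃ w ∈ Z, m • w = z := by
  have hc : IsClosed ((fun y : Y => m • y) '' Z) :=
    (hZ.isCompact.image (continuous_const_smul m)).isClosed
  by_contra hn
  have hn' : z ∈ ((fun y : Y => m • y) '' Z)ᶜ := fun ⟨w, h1, h2⟩ => hn ⟨w, h1, h2⟩
  obtain ⟨g, hg⟩ := exists_bump (M := M) z (hc.isOpen_compl.mem_nhds hn')
  obtain ⟨n, hn⟩ := recur hE hs g one_pos z m
  refine hg _ hn ⟨m ^ n • z, ?_, ?_⟩
  · clear hn
    induction n with
    | zero => simpa
    | succ n ih => rw [pow_succ', mul_smul]; exact hm _ ih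
  · simp only [pow_succ', mul_smul]

end dyn


section dual
variable (M K : Type*) [TopologicalSpace K] [CompactSpace K] [Monoid M] [MulAction M K]
  [ContinuousConstSMul M K]

def tr {M K : Type*} [TopologicalSpace K] [Monoid M] [MulAction M K]
    [ContinuousConstSMul M K] (m : M) (g : C(K, ℝ)) : C(K, ℝ) :=
  ⟨fun x => g (m • x), g.continuous.comp (continuous_const_smul m)⟩

def trL {M K : Type*} [TopologicalSpace K] [CompactSpace K] [Monoid M] [MulAction M K]
    [ContinuousConstSMul M K] (m : M) : C(K, ℝ) →L[ℝ] C(K, ℝ) :=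
  LinearMap.mkContinuous
    { toFun := tr m, map_add' := fun _ _ => rfl, map_smul' := fun _ _ => rfl } 1 (by
      intro g
      rw [one_mul]
      exact (ContinuousMap.norm_le _ (norm_nonneg _)).2 fun x => g.norm_coe_le_norm _)

omit [ContinuousConstSMul M K] [CompactSpace K] in
lemma tr_tr {M K : Type*} [TopologicalSpace K] [Monoid M] [MulAction M K]
    [ContinuousConstSMul M K] (m n : M) (g : C(K, ℝ)) : tr m (tr n g) = tr (n * m) g := by
  ext x
  simp [tr, mul_smul]

def DualC (_M K : Type*) [TopologicalSpace K] [CompactSpace K] : Type _ := StrongDual ℝ C(K, ℝ)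

instance : AddCommGroup (DualC M K) := inferInstanceAs (AddCommGroup (StrongDual ℝ C(K, ℝ)))
instance : Module ℝ (DualC M K) := inferInstanceAs (Module ℝ (StrongDual ℝ C(K, ℝ)))

variable {M K}

def DualC.ev (Λ : DualC M K) : StrongDual ℝ C(K, ℝ) := Λ

def DualC.mk (Λ : StrongDual ℝ C(K, ℝ)) : DualC M K := Λ

lemma pg_bdd (g : C(K, ℝ)) (Λ : DualC M K) : BddAbove (range fun m : M => |Λ.ev (tr m g)|) := by
  refine ⟨‖Λ.ev‖ * ‖g‖, ?_⟩
  rintro _ ⟨m, rfl⟩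
  refine (Λ.ev.le_opNorm _).trans ?_
  gcongr
  exact (ContinuousMap.norm_le _ (norm_nonneg _)).2 fun x => g.norm_coe_le_norm _

variable (M K) in
def pg : SeminormFamily ℝ (DualC M K) C(K, ℝ) := fun g =>
  Seminorm.of (fun Λ => ⨆ m : M, |Λ.ev (tr m g)|)
    (by
      intro Λ Γ
      refine ciSup_le fun m => ?_
      exact (abs_add_le (Λ.ev (tr m g)) (Γ.ev (tr m g))).trans
        (add_le_add (le_ciSup (pg_bdd g Λ) m) (le_ciSup (pg_bdd g Γ) m)))
    (by
      intro c Λ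
      rw [Real.norm_eq_abs, Real.mul_iSup_of_nonneg (abs_nonneg c)]
      congr 1
      ext m
      exact abs_mul c (Λ.ev (tr m g)))

lemma le_pg (g : C(K, ℝ)) (Λ : DualC M K) (m : M) : |Λ.ev (tr m g)| ≤ pg M K g Λ :=
  le_ciSup (pg_bdd g Λ) m

lemma pg_le (g : C(K, ℝ)) (Λ : DualC M K) {c : ℝ} (h : ∀ m : M, |Λ.ev (tr m g)| ≤ c) :
    pg M K g Λ ≤ c := ciSup_le h

instance : TopologicalSpace (DualC M K) := (pg M K).moduleFilterBasis.topology

variable (M K) in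
lemma wpg : WithSeminorms (pg M K) := ⟨rfl⟩

instance : T2Space (DualC M K) := by
  have : IsTopologicalAddGroup (DualC M K) := (wpg M K).topologicalAddGroup
  have : T1Space (DualC M K) := by
    refine (wpg M K).T1_of_separating fun Λ hΛ => ?_
    by_contra! hc
    refine hΛ ?_
    have : ∀ g, Λ.ev g = 0 := by
      intro g
      have := le_pg g Λ 1
      rw [hc g] at this
      have := abs_nonpos_iff.1 this
      rwa [show tr (1 : M) g = g by ext; simp [tr]] at this
    exact ContinuousLinearMap.ext this
  infer_instance

def PP (M K : Type*) [TopologicalSpace K] [CompactSpace K] : Set (DualC M K) :=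
  {Λ | (∀ g, 0 ≤ g → 0 ≤ Λ.ev g) ∧ Λ.ev 1 = 1}

omit [Monoid M] [MulAction M K] [ContinuousConstSMul M K] in
lemma PP_abs {Λ : DualC M K} (hΛ : Λ ∈ PP M K) (g : C(K, ℝ)) : |Λ.ev g| ≤ ‖g‖ := by
  have h1 := hΛ.1 (‖g‖ • 1 - g) (by
    intro x
    have := (abs_le.1 (g.norm_coe_le_norm x)).2
    simpa using this)
  have h2 := hΛ.1 (‖g‖ • 1 + g) (by
    intro x
    have := (abs_le.1 (g.norm_coe_le_norm x)).1
    simp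
    linarith)
  rw [map_sub, map_smul, hΛ.2] at h1
  rw [map_add, map_smul, hΛ.2] at h2
  simp at h1 h2
  rw [abs_le]
  constructor <;> linarith

lemma net (hE : EquiAct M K) (g : C(K, ℝ)) {ε : ℝ} (hε : 0 < ε) :
    ∃ A : Finset C(K, ℝ), ∀ m : M, ∃ h ∈ A, ‖tr m g - h‖ < ε := by
  have hcomp : IsCompact (closure (range fun m : M => BoundedContinuousFunction.mkOfCompact (tr m g))) := by
    refine BoundedContinuousFunction.arzela_ascoli (Metric.closedBall (0 : ℝ) ‖g‖)
      (isCompact_closedBall _ _) _ ?_ ?_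
    · rintro _ x ⟨m, rfl⟩
      simpa [tr] using g.norm_coe_le_norm (m • x)
    · intro x
      rw [Metric.equicontinuousAt_iff_right]
      intro ε hε
      filter_upwards [Metric.equicontinuousAt_iff_right.1 (hE g x) ε hε] with y hy
      rintro ⟨_, m, rfl⟩
      exact hy m
  obtain ⟨t, ht, hcov⟩ := Metric.totallyBounded_iff.1
    (hcomp.totallyBounded.subset subset_closure) ε hε
  classical
  refine ⟨ht.toFinset.image (fun f => f.toContinuousMap), fun m => ?_⟩
  have := hcov ⟨m, rfl⟩
  simp only [mem_iUnion] at this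
  obtain ⟨f, hf, hd⟩ := this
  refine ⟨f.toContinuousMap, Finset.mem_image_of_mem _ (ht.mem_toFinset.2 hf), ?_⟩
  rw [Metric.mem_ball, dist_eq_norm] at hd
  refine lt_of_le_of_lt ?_ hd
  refine (ContinuousMap.norm_le _ (norm_nonneg _)).2 fun x => ?_
  exact (BoundedContinuousFunction.mkOfCompact (tr m g) - f).norm_coe_le_norm x

lemma PP_tendsto (hE : EquiAct M K) {ι : Type*} {l : Filter ι} {Γ : ι → DualC M K}
    (hΓ : ∀ᶠ i in l, Γ i ∈ PP M K)
    {Λ : DualC M K} (hΛ : Λ ∈ PP M K)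
    (h : ∀ g, Tendsto (fun i => (Γ i).ev g) l (𝓝 (Λ.ev g))) : Tendsto Γ l (𝓝 Λ) := by
  rw [(wpg M K).tendsto_nhds]
  intro g ε hε
  obtain ⟨A, hA⟩ := net hE g (ε := ε / 4) (by linarith)
  have : ∀ᶠ i in l, ∀ h ∈ A, |(Γ i).ev h - Λ.ev h| < ε / 4 := by
    rw [Filter.eventually_all_finset]
    intro f _
    have := Metric.tendsto_nhds.1 (h f) (ε / 4) (by linarith)
    simpa [Real.dist_eq] using this
  filter_upwards [this, hΓ] with i hi hΓi
  refine lt_of_le_of_lt (pg_le g _ (c := 3 * (ε / 4)) fun m => ?_) (by linarith)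
  obtain ⟨f, hf, hn⟩ := hA m
  have h1 := PP_abs hΓi (tr m g - f)
  have h2 := PP_abs hΛ (tr m g - f)
  have h3 := hi f hf
  change |(Γ i).ev (tr m g) - Λ.ev (tr m g)| ≤ _
  rw [map_sub] at h1 h2
  rw [abs_le] at h1 h2 ⊢
  rw [abs_lt] at h3
  constructor <;> linarith

lemma PP_compact (hE : EquiAct M K) : IsCompact (PP M K) := by
  let Pw : Set (WeakDual ℝ C(K, ℝ)) := {Λ | (∀ g, 0 ≤ g → 0 ≤ Λ g) ∧ Λ 1 = 1}
  have hcl : IsClosed Pw := by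
    have : Pw = (⋂ g : C(K, ℝ), ⋂ _ : 0 ≤ g, {Λ : WeakDual ℝ C(K, ℝ) | 0 ≤ Λ g}) ∩
      {Λ : WeakDual ℝ C(K, ℝ) | Λ 1 = 1} := by
      ext Λ
      simp [Pw]
    rw [this]
    refine IsClosed.inter (isClosed_iInter fun g => isClosed_iInter fun _ => ?_) ?_
    · exact isClosed_le continuous_const (WeakDual.eval_continuous g)
    · exact isClosed_eq (WeakDual.eval_continuous _) continuous_const
  have hK : IsCompact Pw := by
    refine (WeakDual.isCompact_closedBall (𝕜 := ℝ) (0 : StrongDual ℝ C(K, ℝ)) 1).of_isClosed_subset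
      hcl ?_
    intro Λ hΛ
    simp only [mem_preimage, mem_closedBall_zero_iff]
    refine ContinuousLinearMap.opNorm_le_bound _ zero_le_one fun g => ?_
    rw [one_mul]
    exact PP_abs (M := M) (Λ := DualC.mk (WeakDual.toStrongDual Λ)) hΛ g
  have hco : ContinuousOn (fun Λ : WeakDual ℝ C(K, ℝ) =>
      (DualC.mk (WeakDual.toStrongDual Λ) : DualC M K)) Pw := by
    intro Λ hΛ
    refine PP_tendsto hE ?_ hΛ ?_
    · exact eventually_mem_nhdsWithin
    · intro g
      exact ((WeakDual.eval_continuous g).tendsto Λ).mono_left nhdsWithin_le_nhds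
  convert hK.image_of_continuousOn hco using 1
  ext Λ
  constructor
  · intro h
    exact ⟨StrongDual.toWeakDual Λ.ev, h, rfl⟩
  · rintro ⟨Γ, h, rfl⟩
    exact h

end dual

/-- invariant mean on `C(K)` -/
lemma exists_mean {S : Type u} [Semigroup S] [TopologicalSpace S] (hD : PropertyD.{u, v} S)
    {K : Type v} [TopologicalSpace K] [CompactSpace K] [Nonempty K]
    [MulAction (WithOne S) K] [ContinuousConstSMul (WithOne S) K]
    (hE : EquiAct (WithOne S) K) (hc : ∀ x : K, Continuous fun s : S => (s : WithOne S) • x) :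
    ∃ Λ : StrongDual ℝ C(K, ℝ), (∀ g, 0 ≤ g → 0 ≤ Λ g) ∧ Λ 1 = 1 ∧
      ∀ (s : S) (g : C(K, ℝ)), Λ (tr (s : WithOne S) g) = Λ g := by

  have hcont : ∀ Λ ∈ PP (WithOne S) K, ∀ (m : WithOne S),
      (DualC.mk (Λ.ev.comp (trL m)) : DualC (WithOne S) K) ∈ PP (WithOne S) K := by
    intro Λ hΛ m
    refine ⟨fun g hg => hΛ.1 (tr m g) fun x => hg (m • x), ?_⟩
    change Λ.ev (tr m 1) = 1
    exact hΛ.2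
  have hne : ∀ (g : C(K, ℝ)) (s : WithOne S) (Λ Γ : DualC (WithOne S) K),
      pg (WithOne S) K g (DualC.mk (Λ.ev.comp (trL s)) - DualC.mk (Γ.ev.comp (trL s))) ≤
        pg (WithOne S) K g (Λ - Γ) := by
    intro g s Λ Γ
    refine pg_le g _ fun m => ?_
    have := le_pg g (Λ - Γ) (m * s)
    rw [← tr_tr] at this
    exact this
  obtain ⟨Λ, hΛ, hfix⟩ := hD (DualC (WithOne S) K) C(K, ℝ) (pg (WithOne S) K)
    (wpg (WithOne S) K) (PP (WithOne S) K)
    (fun s Λ => DualC.mk (Λ.ev.comp (trL (s : WithOne S))))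
    (by
      obtain ⟨x⟩ := ‹Nonempty K›
      exact ⟨DualC.mk (ContinuousMap.evalCLM ℝ x), fun g hg => hg x, rfl⟩)
    (by
      intro Λ hΛ Γ hΓ a b ha hb hab
      refine ⟨fun g hg => ?_, ?_⟩
      · change 0 ≤ a * Λ.ev g + b * Γ.ev g
        have := hΛ.1 g hg
        have := hΓ.1 g hg
        positivity
      · change a * Λ.ev 1 + b * Γ.ev 1 = 1
        rw [hΛ.2, hΓ.2]
        linarith)
    (PP_compact hE)
    (fun s Λ hΛ => hcont Λ hΛ s)
    (by
      intro s t Λ hΛ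
      refine ContinuousLinearMap.ext fun g => ?_
      change Λ.ev (tr ((s * t : S) : WithOne S) g) = Λ.ev (tr (t : WithOne S) (tr (s : WithOne S) g))
      rw [tr_tr, WithOne.coe_mul])
    (by
      intro Λ hΛ
      rw [continuous_iff_continuousAt]
      intro s
      refine PP_tendsto hE (Eventually.of_forall fun t : S => hcont Λ hΛ (t : WithOne S))
        (hcont Λ hΛ (s : WithOne S)) fun g => ?_
      change Tendsto (fun i : S => Λ.ev (tr (i : WithOne S) g)) _ (𝓝 (Λ.ev (tr (s : WithOne S) g)))
      refine (Λ.ev.continuous.tendsto _).comp ?_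
      rw [ContinuousMap.tendsto_iff_tendstoUniformly]
      have hE' : Equicontinuous fun (i : S) (x : K) => g ((i : WithOne S) • x) :=
        (hE g).comp (fun i : S => (i : WithOne S))
      have := (hE'.tendsto_uniformFun_iff_pi (𝓝 s) (fun x => g ((s : WithOne S) • x))).2 (by
        rw [tendsto_pi_nhds]
        intro x
        exact ((g.continuous.comp (hc x)).tendsto s))
      rw [UniformFun.tendsto_iff_tendstoUniformly] at this
      exact this)
    (by
      intro s Λ hΛ
      refine ContinuousAt.continuousWithinAt ?_
      rw [ContinuousAt, (wpg (WithOne S) K).tendsto_nhds]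
      intro g ε hε
      have := ((wpg (WithOne S) K).tendsto_nhds (fun Γ : DualC (WithOne S) K => Γ) (f := 𝓝 Λ) Λ).1
        tendsto_id g ε hε
      filter_upwards [this] with Γ hΓ
      exact (hne g s Γ Λ).trans_lt hΓ)
    (fun g s Λ _ Γ _ => hne g s Λ Γ)
  refine ⟨Λ.ev, hΛ.1, hΛ.2, fun s g => ?_⟩
  have := congrArg (fun Γ : DualC (WithOne S) K => Γ.ev g) (hfix s)
  exact this

/-- support of a mean -/
def supp {K : Type*} [TopologicalSpace K] [CompactSpace K] (Λ : StrongDual ℝ C(K, ℝ)) : Set K :=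
  {x | ∀ g : C(K, ℝ), 0 ≤ g → 0 < g x → 0 < Λ g}

section supp
variable {K : Type*} [TopologicalSpace K] [CompactSpace K] {Λ : StrongDual ℝ C(K, ℝ)}

lemma supp_closed : IsClosed (supp Λ) := by
  have : supp Λ = ⋂ g : C(K, ℝ), ⋂ _ : 0 ≤ g, ⋂ _ : ¬ 0 < Λ g, {x | g x ≤ 0} := by
    ext x
    simp only [supp, mem_ofPred_eq, mem_iInter]
    refine forall_congr' fun g => forall_congr' fun _ => ?_
    rw [← not_imp_not, not_lt, not_lt]
  rw [this]
  exact isClosed_iInter fun g => isClosed_iInter fun _ => isClosed_iInter fun _ =>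
    isClosed_le g.continuous continuous_const

lemma supp_null (hp : ∀ g, 0 ≤ g → 0 ≤ Λ g) (h1 : Λ 1 = 1) {h : C(K, ℝ)} (h0 : 0 ≤ h)
    (hs : ∀ x ∈ supp Λ, h x = 0) : Λ h = 0 := by
  refine le_antisymm ?_ (hp h h0)
  refine le_of_forall_pos_le_add fun ε hε => ?_
  rw [zero_add]
  have hC : IsCompact {x | ε ≤ h x} := (isClosed_le continuous_const h.continuous).isCompact
  have hx : ∀ x : K, ε ≤ h x → ∃ g : C(K, ℝ), 0 ≤ g ∧ 0 < g x ∧ Λ g = 0 := by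
    intro x hx
    have : x ∉ supp Λ := fun hm => by rw [hs x hm] at hx; linarith
    simp only [supp, mem_ofPred_eq, not_forall] at this
    obtain ⟨g, hg, hgx, hl⟩ := this
    exact ⟨g, hg, hgx, le_antisymm (not_lt.1 hl) (hp g hg)⟩
  have : ∃ G : C(K, ℝ), 0 ≤ G ∧ Λ G = 0 ∧ ∀ x ∈ {x | ε ≤ h x}, 0 < G x := by
    refine hC.induction_on (p := fun s => ∃ G : C(K, ℝ), 0 ≤ G ∧ Λ G = 0 ∧ ∀ x ∈ s, 0 < G x)
      ?_ ?_ ?_ ?_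
    · exact ⟨0, le_rfl, map_zero _, by simp⟩
    · rintro s t hst ⟨G, a, b, c⟩
      exact ⟨G, a, b, fun x hx => c x (hst hx)⟩
    · rintro s t ⟨G, a, b, c⟩ ⟨G', a', b', c'⟩
      refine ⟨G + G', add_nonneg a a', by rw [map_add, b, b', add_zero], ?_⟩
      rintro x (hx | hx)
      · exact add_pos_of_pos_of_nonneg (c x hx) (a' x)
      · exact add_pos_of_nonneg_of_pos (a x) (c' x hx)
    · intro x hxx
      obtain ⟨g, a, b, c⟩ := hx x hxx
      refine ⟨{y | 0 < g y}, mem_nhdsWithin_of_mem_nhds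
        ((isOpen_lt continuous_const g.continuous).mem_nhds b), g, a, c, fun y hy => hy⟩
  obtain ⟨G, hG0, hG, hpos⟩ := this
  obtain ⟨c, hc, hcG⟩ : ∃ c : ℝ, 0 < c ∧ ∀ x, ε ≤ h x → c ≤ G x := by
    rcases Set.eq_empty_or_nonempty {x | ε ≤ h x} with he | hne
    · exact ⟨1, one_pos, fun x hx => absurd hx (Set.eq_empty_iff_forall_notMem.1 he x)⟩
    · obtain ⟨x0, hx0, hmin⟩ := hC.exists_isMinOn hne G.continuous.continuousOn
      exact ⟨G x0, hpos x0 hx0, fun x hx => hmin hx⟩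
  have := hp (ε • 1 + (‖h‖ / c) • G - h) (by
    intro x
    have hb := (abs_le.1 (h.norm_coe_le_norm x)).2
    have hg : 0 ≤ G x := hG0 x
    change 0 ≤ ε * 1 + (‖h‖ / c) * G x - h x
    rcases le_or_gt ε (h x) with hx | hx
    · have : ‖h‖ ≤ ‖h‖ / c * G x := by
        rw [div_mul_eq_mul_div, le_div_iff₀ hc]
        exact mul_le_mul_of_nonneg_left (hcG x hx) (norm_nonneg _)
      linarith
    · have : 0 ≤ ‖h‖ / c * G x := by positivity
      linarith)
  rw [map_sub, map_add, map_smul, map_smul, h1, hG] at this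
  simp at this
  exact this

lemma supp_nonempty (hp : ∀ g, 0 ≤ g → 0 ≤ Λ g) (h1 : Λ 1 = 1) : (supp Λ).Nonempty := by
  by_contra hn
  have := supp_null hp h1 (h := 1) (fun x => zero_le_one)
    (fun x hx => absurd ⟨x, hx⟩ hn)
  rw [h1] at this
  exact one_ne_zero this

end supp

lemma exists_surj {S : Type u} [Semigroup S] [TopologicalSpace S] (hD : PropertyD.{u, v} S)
    {K : Type v} [TopologicalSpace K] [CompactSpace K] [T2Space K] [Nonempty K]
    [MulAction (WithOne S) K] [ContinuousConstSMul (WithOne S) K]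
    (hE : EquiAct (WithOne S) K) (hc : ∀ x : K, Continuous fun s : S => (s : WithOne S) • x) :
    ∃ F : Set K, IsClosed F ∧ F.Nonempty ∧ ∀ m : WithOne S, (fun x => m • x) '' F = F := by
  obtain ⟨Λ, hp, h1, hinv⟩ := exists_mean hD hE hc
  refine ⟨supp Λ, supp_closed, supp_nonempty hp h1, fun m => ?_⟩
  have hinv' : ∀ g, Λ (tr m g) = Λ g := by
    intro g
    induction m using WithOne.recOneCoe with
    | one => congr 1; ext; simp [tr]
    | coe s => exact hinv s g
  refine Subset.antisymm ?_ ?_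
  · rintro _ ⟨x, hx, rfl⟩ g hg hgx
    rw [← hinv' g]
    exact hx (tr m g) (fun y => hg (m • y)) hgx
  · intro x hx
    by_contra hn
    have hcl : IsClosed ((fun x => m • x) '' supp Λ) :=
      (supp_closed.isCompact.image (continuous_const_smul m)).isClosed
    obtain ⟨f, h0, hf1, h01⟩ := exists_continuous_zero_one_of_isClosed hcl
      (isClosed_singleton (x := x)) (by simpa using hn)
    have a := hx f (fun y => (h01 y).1) (by rw [hf1 rfl]; exact one_pos)
    rw [← hinv' f] at a
    have := supp_null hp h1 (h := tr m f) (fun y => (h01 _).1) (fun y hy => h0 ⟨y, hy, rfl⟩)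
    linarith


section lcs
variable {X : Type*} [AddCommGroup X] [Module ℝ X] [TopologicalSpace X]
  [IsTopologicalAddGroup X] [ContinuousSMul ℝ X] [LocallyConvexSpace ℝ X]

lemma closed_pre {Y : Type*} [TopologicalSpace Y] {j : Y → X}
    (hj : Continuous fun y => toWeakSpace ℝ X (j y)) {C : Set X} (hC : Convex ℝ C)
    (hcl : IsClosed C) : IsClosed (j ⁻¹' C) := by
  have h1 := hC.toWeakSpace_closure (𝕜 := ℝ)
  rw [hcl.closure_eq] at h1
  have h2 : IsClosed (toWeakSpace ℝ X '' C) := by rw [h1]; exact isClosed_closure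
  have h3 := h2.preimage hj
  convert h3 using 1
  ext y
  simp

lemma closed_ball {Y : Type*} [TopologicalSpace Y] {j : Y → X}
    (hj : Continuous fun y => toWeakSpace ℝ X (j y)) {p : Seminorm ℝ X} (hp : Continuous p)
    (d : X) (r : ℝ) : IsClosed {y | p (j y - d) ≤ r} := by
  have hC : Convex ℝ (p.closedBall d r) := p.convex_closedBall d r
  have hcl : IsClosed (p.closedBall d r) := by
    have : p.closedBall d r = {x | p (x - d) ≤ r} := by
      ext x; simp [Seminorm.mem_closedBall]
    rw [this]
    exact isClosed_le (hp.comp (continuous_id.sub continuous_const)) continuous_const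
  convert closed_pre hj hC hcl using 1
  ext x; simp [Seminorm.mem_closedBall]

lemma totbdd {M Y : Type*} [TopologicalSpace Y] [CompactSpace Y] [T2Space Y] [Monoid M]
    [MulAction M Y] [ContinuousConstSMul M Y] (hE : EquiAct M Y)
    (hs : ∀ m : M, Function.Surjective fun y : Y => m • y) {j : Y → X}
    (hj : Continuous fun y => toWeakSpace ℝ X (j y)) {p : Seminorm ℝ X} (hp : Continuous p)
    (hne : ∀ (m : M) (y z : Y), p (j (m • y) - j (m • z)) ≤ p (j y - j z)) (x : Y)
    {ε : ℝ} (hε : 0 < ε) :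
    ∃ A : Finset M, ∀ z ∈ closure (range fun m : M => m • x),
      ∃ m ∈ A, p (j z - j (m • x)) ≤ ε := by
  by_contra hcon
  push Not at hcon
  obtain ⟨s, -, hsep⟩ := exists_seq_of_forall_finset_exists (fun _ : M => True)
    (fun m n => ε < p (j (n • x) - j (m • x))) (by
      intro A _
      by_contra hA
      push Not at hA
      obtain ⟨z, hz, hz'⟩ := hcon A
      have hclo : IsClosed (⋃ m ∈ A, {y : Y | p (j y - j (m • x)) ≤ ε}) :=
        isClosed_biUnion_finset fun m _ => closed_ball hj hp _ _
      have hsub : (range fun m : M => m • x) ⊆ ⋃ m ∈ A, {y : Y | p (j y - j (m • x)) ≤ ε} := by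
        rintro _ ⟨m, rfl⟩
        obtain ⟨n, hn, h⟩ := hA m trivial
        simp only [mem_iUnion]
        exact ⟨n, hn, h⟩
      have := closure_minimal hsub hclo hz
      simp only [mem_iUnion] at this
      obtain ⟨m, hm, h⟩ := this
      exact absurd h (not_le.2 (hz' m hm)))
  let w : List ℕ → M := fun l => (l.map s).prod
  have hw : ∀ l l', w (l ++ l') = w l * w l' := fun l l' => by simp [w]
  have hws : ∀ n, w [n] = s n := fun n => by simp [w]
  have hwp : ∀ (l : List ℕ) (n : ℕ), ∃ l', w l' = w l ^ n := by
    intro l n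
    induction n with
    | zero => exact ⟨[], by simp [w]⟩
    | succ n ih =>
      obtain ⟨l', h⟩ := ih
      exact ⟨l' ++ l, by rw [hw, h, pow_succ]⟩
  let Z : Set Y := closure (range fun l => w l • x)
  have hZc : IsClosed Z := isClosed_closure
  have hZm : ∀ l, w l • x ∈ Z := fun l => subset_closure ⟨l, rfl⟩
  have hZi : ∀ l, ∀ z ∈ Z, w l • z ∈ Z := by
    intro l z hz
    have : Z ⊆ (fun z => w l • z) ⁻¹' Z := by
      refine closure_minimal ?_ (hZc.preimage (continuous_const_smul _))
      rintro _ ⟨l', rfl⟩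
      change w l • w l' • x ∈ Z
      rw [← mul_smul, ← hw]
      exact hZm _
    exact this hz
  -- separability
  obtain ⟨D, hDc, hD⟩ : ∃ D : Set X, D.Countable ∧ ∀ z ∈ Z, ∃ d ∈ D, p (j z - d) ≤ ε / 4 := by
    have hsp : TopologicalSpace.IsSeparable
        (Submodule.span ℝ (range fun l => j (w l • x)) : Set X) :=
      (countable_range _).isSeparable.span
    obtain ⟨D, hDc, hD⟩ := hsp
    refine ⟨D, hDc, fun z hz => ?_⟩
    have hV : Convex ℝ (closure (Submodule.span ℝ (range fun l => j (w l • x)) : Set X)) :=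
      (Submodule.convex _).closure
    have hcl := closed_pre hj hV isClosed_closure
    have hsub : Z ⊆ j ⁻¹' (closure (Submodule.span ℝ (range fun l => j (w l • x)) : Set X)) := by
      refine closure_minimal ?_ hcl
      rintro _ ⟨l, rfl⟩
      exact subset_closure (Submodule.subset_span ⟨l, rfl⟩)
    have hzD : j z ∈ closure D := closure_minimal hD isClosed_closure (hsub hz)
    have hnb : {d : X | p (j z - d) < ε / 4} ∈ 𝓝 (j z) := by
      refine (isOpen_lt (hp.comp (continuous_const.sub continuous_id)) continuous_const).mem_nhds ?_
      change p (j z - j z) < ε / 4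
      rw [sub_self, map_zero]
      linarith
    obtain ⟨d, h1, h2⟩ := mem_closure_iff_nhds.1 hzD _ hnb
    exact ⟨d, h2, le_of_lt h1⟩
  -- Baire
  obtain ⟨d, U, hU, ⟨l0, hl0⟩, hUd⟩ : ∃ (d : X) (U : Set Y), IsOpen U ∧ (∃ l, w l • x ∈ U) ∧
      ∀ z ∈ U ∩ Z, p (j z - d) ≤ ε / 4 := by
    have : CompactSpace Z := isCompact_iff_compactSpace.1 hZc.isCompact
    have : Nonempty Z := ⟨⟨_, hZm []⟩⟩
    have : Countable D := hDc
    obtain ⟨d, hd⟩ := nonempty_interior_of_iUnion_of_closed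
      (f := fun d : D => {z : Z | p (j z - d) ≤ ε / 4})
      (fun d => closed_ball (Y := Z) (j := fun z => j z) (hj.comp continuous_subtype_val) hp _ _)
      (by
        refine eq_univ_of_forall fun z => ?_
        obtain ⟨d, hd, h⟩ := hD z z.2
        simp only [mem_iUnion]
        exact ⟨⟨d, hd⟩, h⟩)
    obtain ⟨z, hz⟩ := hd
    obtain ⟨V, hVs, hV, hzV⟩ := mem_interior.1 hz
    obtain ⟨U, hU, rfl⟩ := isOpen_induced_iff.1 hV
    refine ⟨d, U, hU, ?_, fun y hy => hVs (a := ⟨y, hy.2⟩) hy.1⟩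
    obtain ⟨_, h1, l, rfl⟩ := mem_closure_iff.1 z.2 U hU hzV
    exact ⟨l, h1⟩
  obtain ⟨g, hg⟩ := exists_bump (M := M) (w l0 • x) (hU.mem_nhds hl0)
  obtain ⟨n, k, hnk, hd1, -⟩ := pigeon hE g (δ := 1 / 3) (by norm_num)
    (fun n => s n • x) (fun n => s n • x)
  have hzn : ∀ n, s n • x ∈ Z := fun n => by rw [← hws]; exact hZm _
  -- find `l` with `w l • w l0 • x` close to `s n • x`
  obtain ⟨l, hl⟩ : ∃ l, dd M g (s n • x) (w l • w l0 • x) < 1 / 3 := by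
    obtain ⟨i, hi⟩ := recur hE hs g (δ := 1 / 3) (by norm_num) x (w l0)
    obtain ⟨l', hl'⟩ := hwp l0 i
    refine ⟨[n] ++ l', ?_⟩
    rw [hw, hl', mul_smul, ← mul_smul _ (w l0), ← pow_succ, hws]
    exact lt_of_le_of_lt (dd_smul_le g _ _ _) hi
  have key : ∀ i, dd M g (s i • x) (w l • w l0 • x) < 1 →
      ∃ u ∈ U ∩ Z, w l • u = s i • x := by
    intro i hi
    obtain ⟨u, hu, hu'⟩ := surj_on_closed hE hs hZc (hZi l) (hzn i)
    refine ⟨u, ⟨hg u ?_, hu⟩, hu'⟩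
    rw [← hu', dd_isom hE hs, dd_comm] at hi
    exact hi
  obtain ⟨u, hu, hu'⟩ := key n (by linarith)
  obtain ⟨v, hv, hv'⟩ := key k (by
    have := dd_tri (M := M) g (s k • x) (s n • x) (w l • w l0 • x)
    rw [dd_comm g (s k • x) (s n • x)] at this
    linarith)
  have h1 := hUd u hu
  have h2 := hUd v hv
  have h3 := hne (w l) v u
  rw [hu', hv'] at h3
  have h4 := hsep n k hnk
  have h5 : p (j v - j u) ≤ p (j v - d) + p (j u - d) := by
    have := map_sub_le_add p (j v - d) (j u - d)
    rwa [sub_sub_sub_cancel_right] at this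
  linarith

end lcs


lemma unif_aux {W : Type*} [AddCommGroup W] [TopologicalSpace W] [IsTopologicalAddGroup W]
    {K : Set W} (hK : IsCompact K) (g : C(K, ℝ)) {ε : ℝ} (hε : 0 < ε) :
    ∃ V ∈ 𝓝 (0 : W), ∀ a b : K, (b : W) - a ∈ V → |g a - g b| < ε := by
  let _ : UniformSpace W := IsTopologicalAddGroup.rightUniformSpace W
  have : IsUniformAddGroup W := isUniformAddGroup_of_addCommGroup
  have : CompactSpace K := isCompact_iff_compactSpace.1 hK
  have hg := CompactSpace.uniformContinuous_of_continuous g.continuous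
  have h1 := hg (Metric.dist_mem_uniformity hε)
  rw [mem_map, uniformity_subtype, mem_comap] at h1
  obtain ⟨t, ht, hts⟩ := h1
  rw [uniformity_eq_comap_nhds_zero W, mem_comap] at ht
  obtain ⟨V, hV, hVt⟩ := ht
  refine ⟨V, hV, fun a b hab => ?_⟩
  have := hts (a := (a, b)) (hVt (a := ((a : W), (b : W))) hab)
  simpa [Real.dist_eq] using this

lemma demarr {W : Type*} [AddCommGroup W] [Module ℝ W] (p : Seminorm ℝ W) {K B : Set W}
    (hK : Convex ℝ K) (hBK : B ⊆ K) (hB : B.Nonempty)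
    (htb : ∀ ε : ℝ, 0 < ε → ∃ A : Finset W, (∀ a ∈ A, a ∈ B) ∧ ∀ z ∈ B, ∃ a ∈ A, p (a - z) ≤ ε)
    (hmin : ∀ r : ℝ, (∃ u ∈ K, ∀ b ∈ B, p (u - b) ≤ r) → ∀ u ∈ K, ∀ b ∈ B, p (u - b) ≤ r)
    {a b : W} (ha : a ∈ B) (hb : b ∈ B) : p (a - b) = 0 := by
  obtain ⟨a0, ha0⟩ := hB
  let T : Set ℝ := {r | ∃ a ∈ B, ∃ b ∈ B, p (a - b) = r}
  have hT : BddAbove T := by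
    obtain ⟨A, hA, hA'⟩ := htb 1 one_pos
    have hle : ∀ u ∈ K, ∀ b ∈ B, p (u - b) ≤ (∑ a ∈ A, p (a0 - a)) + 1 := by
      refine hmin _ ⟨a0, hBK ha0, fun b hb => ?_⟩
      obtain ⟨a, haA, h⟩ := hA' b hb
      have h1 : p (a0 - a) ≤ ∑ a ∈ A, p (a0 - a) :=
        Finset.single_le_sum (f := fun a => p (a0 - a)) (fun i _ => apply_nonneg p _) haA
      have h2 := map_add_le_add p (a0 - a) (a - b)
      rw [sub_add_sub_cancel] at h2
      linarith
    refine ⟨(∑ a ∈ A, p (a0 - a)) + 1, ?_⟩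
    rintro r ⟨a, ha, b, hb, rfl⟩
    exact hle a (hBK ha) b hb
  have hR : ∀ a ∈ B, ∀ b ∈ B, p (a - b) ≤ sSup T := fun a ha b hb => le_csSup hT ⟨a, ha, b, hb, rfl⟩
  have hTn : T.Nonempty := ⟨_, a0, ha0, a0, ha0, rfl⟩
  refine le_antisymm ((hR a ha b hb).trans ?_) (apply_nonneg p _)
  by_contra hpos
  push Not at hpos
  set R := sSup T with hRdef
  obtain ⟨A, hA, hA'⟩ := htb (R / 2) (by linarith)
  have hAn : A.Nonempty := by
    obtain ⟨a, h, -⟩ := hA' a0 ha0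
    exact ⟨a, h⟩
  have hn : (0 : ℝ) < A.card := by exact_mod_cast hAn.card_pos
  set n : ℝ := (A.card : ℝ) with hndef
  have hle : ∀ u ∈ K, ∀ b ∈ B, p (u - b) ≤ R - R / 2 / n := by
    refine hmin _ ⟨∑ a ∈ A, (1 / n) • a, ?_, fun b hb => ?_⟩
    · refine hK.sum_mem (fun _ _ => by positivity) ?_ (fun a ha => hBK (hA a ha))
      rw [Finset.sum_const, nsmul_eq_mul, ← hndef]
      field_simp
    · have e : (∑ a ∈ A, (1 / n) • a) - b = ∑ a ∈ A, (1 / n) • (a - b) := by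
        simp only [smul_sub, Finset.sum_sub_distrib, Finset.sum_const]
        rw [← Nat.cast_smul_eq_nsmul ℝ, ← hndef, smul_smul, mul_one_div_cancel hn.ne', one_smul]
      rw [e]
      have h1 : p (∑ a ∈ A, (1 / n) • (a - b)) ≤ ∑ a ∈ A, p ((1 / n) • (a - b)) :=
        Finset.le_sum_of_subadditive p (map_zero p).le (map_add_le_add p) _ _
      refine h1.trans ?_
      have h2 : ∀ a, p ((1 / n) • (a - b)) = (1 / n) * p (a - b) := by
        intro a
        rw [map_smul_eq_mul, Real.norm_of_nonneg (by positivity)]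
      simp only [h2, ← Finset.mul_sum]
      obtain ⟨a1, ha1, hle1⟩ := hA' b hb
      have h3 : ∑ a ∈ A, p (a - b) ≤ n * R - R / 2 := by
        classical
        rw [← Finset.add_sum_erase A _ ha1]
        have h4 : ∑ a ∈ A.erase a1, p (a - b) ≤ (A.erase a1).card • R :=
          Finset.sum_le_card_nsmul _ _ _ fun a ha => hR a (hA a (Finset.mem_of_mem_erase ha)) b hb
        rw [nsmul_eq_mul, Finset.card_erase_of_mem ha1, Nat.cast_sub hAn.card_pos, ← hndef] at h4
        push_cast at h4
        linarith
      calc 1 / n * ∑ a ∈ A, p (a - b) ≤ 1 / n * (n * R - R / 2) := by gcongr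
        _ = R - R / 2 / n := by field_simp
  have : R ≤ R - R / 2 / n := csSup_le hTn (by
    rintro r ⟨a, ha, b, hb, rfl⟩
    exact hle a (hBK ha) b hb)
  have : 0 < R / 2 / n := by positivity
  linarith

@[reducible] def actOf {S Y : Type*} [Semigroup S] (a : S → Y → Y)
    (h : ∀ s t y, a (s * t) y = a s (a t y)) : MulAction (WithOne S) Y where
  smul m y := WithOne.recOneCoe (motive := fun _ => Y) y (fun s => a s y) m
  one_smul _ := rfl
  mul_smul m n y := by
    induction m using WithOne.recOneCoe with
    | one => rw [one_mul]; rfl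
    | coe s =>
      induction n using WithOne.recOneCoe with
      | one => rw [mul_one]; rfl
      | coe t => exact h s t y

lemma weakTop_eq (X : Type*) [AddCommGroup X] [Module ℝ X] [TopologicalSpace X] :
    weakTop ℝ X = (inferInstance : TopologicalSpace (WeakSpace ℝ X)) := by
  change _ = TopologicalSpace.induced (fun (x : X) (y : X →L[ℝ] ℝ) => y x) Pi.topologicalSpace
  rw [Pi.topologicalSpace, induced_iInf]
  simp only [induced_compose]
  rfl

lemma weak_t2 (X : Type*) [AddCommGroup X] [Module ℝ X] [TopologicalSpace X] [T2Space X]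
    [IsTopologicalAddGroup X] [ContinuousSMul ℝ X] [LocallyConvexSpace ℝ X] :
    T2Space (WeakSpace ℝ X) := by
  refine (WeakBilin.isEmbedding (B := (topDualPairing ℝ X).flip) ?_).t2Space
  intro x y hxy
  by_contra hne
  obtain ⟨f, hf⟩ := SeparatingDual.exists_separating_of_ne (R := ℝ) hne
  exact hf (congrArg (fun φ => φ f) hxy)


section fin
variable {S : Type u} [Semigroup S] [TopologicalSpace S]

lemma fix_of_minimal (hD : PropertyD.{u, v} S) {X : Type v} [AddCommGroup X] [Module ℝ X]
    [TopologicalSpace X] [T2Space X] [IsTopologicalAddGroup X] [ContinuousSMul ℝ X]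
    [LocallyConvexSpace ℝ X] {ι : Type v} (Q : SeminormFamily ℝ X ι)
    (hQ : WithSeminorms Q)
    (q : ι → Seminorm ℝ (WeakSpace ℝ X))
    (hq : ∀ i, q i = (Q i).comp ((toWeakSpace ℝ X).symm : WeakSpace ℝ X →ₗ[ℝ] X))
    (K : Set (WeakSpace ℝ X)) (π : S → WeakSpace ℝ X → WeakSpace ℝ X)
    (hne : K.Nonempty) (hK : Convex ℝ K) (hKc : IsCompact K) (hm : ∀ s, MapsTo (π s) K K)
    (hmul : ∀ s t : S, ∀ x ∈ K, π (s * t) x = π s (π t x))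
    (hc1 : ∀ x ∈ K, Continuous fun s => π s x) (hc2 : ∀ s, ContinuousOn (π s) K)
    (hnx : ∀ (i : ι) (s : S), ∀ x ∈ K, ∀ y ∈ K, q i (π s x - π s y) ≤ q i (x - y))
    (heq : ∀ x ∈ K, ∀ V ∈ 𝓝 (0 : WeakSpace ℝ X), ∃ U ∈ 𝓝 x, ∀ s : S, ∀ y ∈ U ∩ K,
      π s y - π s x ∈ V)
    (hmin : ∀ C ⊆ K, C.Nonempty → Convex ℝ C → IsCompact C → (∀ s, MapsTo (π s) C C) → C = K) :
    ∃ x ∈ K, ∀ s : S, π s x = x := by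
  have hT2 : T2Space (WeakSpace ℝ X) := weak_t2 X
  have : CompactSpace K := isCompact_iff_compactSpace.1 hKc
  have : Nonempty K := hne.to_subtype
  let _ : MulAction (WithOne S) K := actOf (fun s y => ⟨π s y, hm s y.2⟩)
    (fun s t y => Subtype.ext (hmul s t y y.2))
  have hsm : ∀ (s : S) (y : K), (((s : WithOne S) • y : K) : WeakSpace ℝ X) = π s y :=
    fun s y => rfl
  have : ContinuousConstSMul (WithOne S) K := ⟨fun m => by
    induction m using WithOne.recOneCoe with
    | one => simpa using continuous_id'
    | coe s => exact ((hc2 s).domRestrict).subtype_mk _⟩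
  have hE : EquiAct (WithOne S) K := by
    intro g x
    rw [Metric.equicontinuousAt_iff_right]
    intro ε hε
    obtain ⟨V, hV, hg⟩ := unif_aux hKc g hε
    obtain ⟨U, hU, hUs⟩ := heq x x.2 V hV
    have h1 : ∀ᶠ y : K in 𝓝 x, (y : WeakSpace ℝ X) ∈ U :=
      continuous_subtype_val.continuousAt.eventually hU
    have h2 : ∀ᶠ y : K in 𝓝 x, dist (g x) (g y) < ε := by
      have := Metric.tendsto_nhds.1 (g.continuous.tendsto x) ε hε
      simpa only [dist_comm] using this
    filter_upwards [h1, h2] with y hy hy2 m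
    induction m using WithOne.recOneCoe with
    | one => simpa using hy2
    | coe s =>
      rw [Real.dist_eq]
      exact hg _ _ (hUs s y ⟨hy, y.2⟩)
  obtain ⟨F, hFc, hFn, hFs⟩ := exists_surj hD hE (fun x => by
    exact (hc1 x x.2).subtype_mk _)
  have hFm : ∀ (m : WithOne S), ∀ x ∈ F, m • x ∈ F := by
    intro m x hx
    rw [← hFs m]
    exact ⟨x, hx, rfl⟩
  let F' : SubMulAction (WithOne S) K := ⟨F, fun m {x} hx => hFm m x hx⟩
  have : CompactSpace F' := isCompact_iff_compactSpace.1 hFc.isCompact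
  have : ContinuousConstSMul (WithOne S) F' := ⟨fun m =>
    ((continuous_const_smul m).comp continuous_subtype_val).subtype_mk _⟩
  have hEF : EquiAct (WithOne S) F' := by
    intro g x
    obtain ⟨G, hG⟩ := ContinuousMap.exists_restrict_eq hFc (Y := ℝ) g
    have hG' : ∀ y : F', g y = G y := fun y => by rw [← hG]; rfl
    rw [Metric.equicontinuousAt_iff_right]
    intro ε hε
    have := Metric.equicontinuousAt_iff_right.1 (hE G x) ε hε
    filter_upwards [continuous_subtype_val.continuousAt.eventually this] with y hy m
    rw [hG', hG']
    exact hy m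
  have hsF : ∀ m : WithOne S, Function.Surjective fun y : F' => m • y := by
    rintro m ⟨y, hy⟩
    have hy' : y ∈ F := hy
    rw [← hFs m] at hy'
    obtain ⟨z, hz, rfl⟩ := hy'
    exact ⟨⟨z, hz⟩, rfl⟩
  obtain ⟨x0, hx0⟩ := hFn
  let x : F' := ⟨x0, hx0⟩
  let val : F' → WeakSpace ℝ X := fun y => ((y : K) : WeakSpace ℝ X)
  have hval : Continuous val := continuous_subtype_val.comp continuous_subtype_val
  let O : Set F' := closure (range fun m : WithOne S => m • x)
  have hOi : ∀ (m : WithOne S), ∀ z ∈ O, m • z ∈ O := by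
    intro m z hz
    have : O ⊆ (fun z => m • z) ⁻¹' O := by
      refine closure_minimal ?_ (isClosed_closure.preimage (continuous_const_smul _))
      rintro _ ⟨l', rfl⟩
      change m • l' • x ∈ O
      rw [← mul_smul]
      exact subset_closure ⟨_, rfl⟩
    exact this hz
  have hqa : ∀ i (a b : WeakSpace ℝ X), q i (a - b) =
      Q i ((toWeakSpace ℝ X).symm a - (toWeakSpace ℝ X).symm b) := by
    intro i a b
    rw [hq, ← map_sub]
    rfl
  have hcW : Continuous fun y : WeakSpace ℝ X => toWeakSpace ℝ X ((toWeakSpace ℝ X).symm y) := by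
    simpa using continuous_id'
  have hnx' : ∀ i (m : WithOne S) (y z : F'),
      q i (val (m • y) - val (m • z)) ≤ q i (val y - val z) := by
    intro i m y z
    induction m using WithOne.recOneCoe with
    | one => simp
    | coe s => exact hnx i s _ y.1.2 _ z.1.2
  have hzero : ∀ i, ∀ z ∈ O, q i (val z - val x) = 0 := by
    intro i z hz
    refine demarr (q i) (K := K) (B := val '' O) hK ?_ ?_ ?_ ?_ ⟨z, hz, rfl⟩
      ⟨x, subset_closure ⟨1, one_smul _ _⟩, rfl⟩
    · rintro _ ⟨y, -, rfl⟩
      exact y.1.2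
    · exact ⟨_, z, hz, rfl⟩
    · intro ε hε
      obtain ⟨A, hA⟩ := totbdd hEF hsF (j := fun y => (toWeakSpace ℝ X).symm (val y))
        (by simpa using hval) (hQ.continuous_seminorm i)
        (fun m y z => by rw [← hqa, ← hqa]; exact hnx' i m y z) x hε
      classical
      refine ⟨A.image fun m => val (m • x), ?_, ?_⟩
      · intro a ha
        obtain ⟨m, hm, rfl⟩ := Finset.mem_image.1 ha
        exact ⟨_, subset_closure ⟨m, rfl⟩, rfl⟩
      · rintro _ ⟨y, hy, rfl⟩
        obtain ⟨m, hm, h⟩ := hA y hy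
        refine ⟨_, Finset.mem_image_of_mem _ hm, ?_⟩
        rw [map_sub_rev, hqa]
        exact h
    · rintro r ⟨u, hu, hur⟩
      have hC : {u ∈ K | ∀ b ∈ val '' O, q i (u - b) ≤ r} = K := by
        refine hmin _ (fun u hu => hu.1) ⟨u, hu, hur⟩ ?_ ?_ ?_
        · intro y hy z hz a b ha hb hab
          refine ⟨hK hy.1 hz.1 ha hb hab, fun c hc => ?_⟩
          have e : a • y + b • z - c = a • (y - c) + b • (z - c) := by
            have : c = a • c + b • c := by rw [← add_smul, hab, one_smul]
            nth_rewrite 1 [this]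
            simp only [smul_sub]
            abel
          rw [e]
          refine (map_add_le_add _ _ _).trans ?_
          rw [map_smul_eq_mul, map_smul_eq_mul, Real.norm_of_nonneg ha, Real.norm_of_nonneg hb]
          have h1 := mul_le_mul_of_nonneg_left (hy.2 c hc) ha
          have h2 := mul_le_mul_of_nonneg_left (hz.2 c hc) hb
          have h3 : a * r + b * r = r := by rw [← add_mul, hab, one_mul]
          linarith
        · have : {u ∈ K | ∀ b ∈ val '' O, q i (u - b) ≤ r} =
              K ∩ ⋂ b ∈ val '' O, {u | q i (u - b) ≤ r} := by
            ext u
            simp only [mem_inter_iff, mem_iInter]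
            rfl
          rw [this]
          refine hKc.inter_right (isClosed_biInter fun b _ => ?_)
          simp only [hqa]
          exact closed_ball hcW (hQ.continuous_seminorm i) _ _
        · rintro s y ⟨hy, hy'⟩
          refine ⟨hm s hy, ?_⟩
          rintro _ ⟨b, hb, rfl⟩
          obtain ⟨c, hc, rfl⟩ := surj_on_closed hEF hsF isClosed_closure (hOi (s : WithOne S)) hb
          exact (hnx i s y hy _ c.1.2).trans (hy' _ ⟨c, hc, rfl⟩)
      intro u hu
      rw [← hC] at hu
      exact hu.2
  have : T1Space X := inferInstance
  refine ⟨val x, x.1.2, fun s => ?_⟩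
  by_contra hns
  have hns' : (toWeakSpace ℝ X).symm (π s (val x)) - (toWeakSpace ℝ X).symm (val x) ≠ 0 :=
    sub_ne_zero.2 fun h => hns ((toWeakSpace ℝ X).symm.injective h)
  obtain ⟨i, hi⟩ := hQ.separating_of_T1 _ hns'
  apply hi
  rw [← hqa]
  exact hzero i ((s : WithOne S) • x) (subset_closure ⟨_, rfl⟩)

end fin


lemma E_of_D {S : Type u} [Semigroup S] [TopologicalSpace S] (hD : PropertyD.{u, v} S) :
    PropertyE.{u, v} S := by
  intro X _ _ _ _ ι _ Q hQ
  have : IsTopologicalAddGroup X := hQ.topologicalAddGroup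
  have : ContinuousSMul ℝ X := hQ.continuousSMul
  have : LocallyConvexSpace ℝ X := hQ.toLocallyConvexSpace
  have hT2 : T2Space (WeakSpace ℝ X) := weak_t2 X
  rw [weakTop_eq]
  intro K π hne hK hKc hm hmul hc1 hc2 hnx heq
  let W := WeakSpace ℝ X
  let K' : Set W := K
  let C : Set (Set W) := {A | A ⊆ K' ∧ A.Nonempty ∧ Convex ℝ A ∧ IsCompact A ∧
    ∀ s, MapsTo (π s) A A}
  obtain ⟨A, hAK, hA⟩ := zorn_superset_nonempty C (by
    intro c hc hch hcn
    refine ⟨⋂₀ c, ⟨?_, ?_, ?_, ?_, ?_⟩, fun s hs => sInter_subset_of_mem hs⟩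
    · obtain ⟨A, hA⟩ := hcn
      exact (sInter_subset_of_mem hA).trans (hc hA).1
    · have : Nonempty c := hcn.to_subtype
      refine IsCompact.nonempty_sInter_of_directed_nonempty_isCompact_isClosed ?_
        (fun A hA => (hc hA).2.1) (fun A hA => (hc hA).2.2.2.1)
        (fun A hA => (hc hA).2.2.2.1.isClosed)
      intro A hA B hB
      rcases hch.total hA hB with h | h
      exacts [⟨A, hA, Subset.rfl, h⟩, ⟨B, hB, h, Subset.rfl⟩]
    · exact convex_sInter fun A hA => (hc hA).2.2.1
    · obtain ⟨A, hA⟩ := hcn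
      exact (hc hA).2.2.2.1.of_isClosed_subset
        (isClosed_sInter fun B hB => (hc hB).2.2.2.1.isClosed) (sInter_subset_of_mem hA)
    · intro s x hx B hB
      exact (hc hB).2.2.2.2 s (hx B hB)) K' ⟨Subset.rfl, hne, hK, hKc, hm⟩
  obtain ⟨-, hAn, hAv, hAc, hAm⟩ := hA.prop
  obtain ⟨x, hx, hfx⟩ := fix_of_minimal hD Q hQ
    (fun i => (Q i).comp ((toWeakSpace ℝ X).symm : WeakSpace ℝ X →ₗ[ℝ] X)) (fun i => rfl)
    A π hAn hAv hAc hAm (fun s t x hx => hmul s t x (hAK hx)) (fun x hx => hc1 x (hAK hx))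
    (fun s => ContinuousOn.mono (α := W) (β := W) (hc2 s) hAK) (fun i s x hx y hy => hnx i s x (hAK hx) y (hAK hy))
    (by
      intro x hx V hV
      obtain ⟨U, hU, h⟩ := heq x (hAK hx) V hV
      exact ⟨U, hU, fun s y hy => h s y ⟨hy.1, hAK hy.2⟩⟩)
    (by
      intro B hB h1 h2 h3 h4
      exact Subset.antisymm hB (hA.le_of_le ⟨hB.trans hAK, h1, h2, h3, h4⟩ hB))
  exact ⟨x, hAK hx, hfx⟩

lemma D_of_E {S : Type u} [Semigroup S] [TopologicalSpace S] (hE : PropertyE.{u, v} S) :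
    PropertyD.{u, v} S := by
  intro X _ _ τ _ ι _ Q hQ K π hne hK hKc hm hmul hc1 hc2 hnx
  have : IsTopologicalAddGroup X := hQ.topologicalAddGroup
  have : ContinuousSMul ℝ X := hQ.continuousSMul
  have : LocallyConvexSpace ℝ X := hQ.toLocallyConvexSpace
  have hle : τ ≤ weakTop ℝ X := le_iInf fun f => continuous_iff_le_induced.1 f.continuous
  have hT2 : @T2Space X (weakTop ℝ X) := by rw [weakTop_eq]; exact weak_t2 X
  have hcomp : ∀ A : Set X, IsCompact A → @IsCompact X (weakTop ℝ X) A := by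
    intro A hA
    have := @IsCompact.image X X τ (weakTop ℝ X) A id hA (continuous_id_of_le hle)
    rwa [image_id] at this
  have hn : ∀ x : X, 𝓝 x ≤ @nhds X (weakTop ℝ X) x := fun x => nhds_mono hle
  have htop : ∀ x ∈ K, ∀ N ∈ 𝓝 x, ∃ U ∈ @nhds X (weakTop ℝ X) x, U ∩ K ⊆ N := by
    intro x hx N hN
    have h1 : IsCompact (K \ interior N) := hKc.diff isOpen_interior
    have h2 := @IsCompact.isClosed X (weakTop ℝ X) hT2 _ (hcomp _ h1)
    refine ⟨(K \ interior N)ᶜ, ?_, ?_⟩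
    · refine @IsOpen.mem_nhds X (weakTop ℝ X) x _ (@IsClosed.isOpen_compl X (weakTop ℝ X) _ h2) ?_
      exact fun h => h.2 (mem_interior_iff_mem_nhds.2 hN)
    · rintro y ⟨hy, hyK⟩
      by_contra hyN
      exact hy ⟨hyK, fun h => hyN (interior_subset h)⟩
  refine hE X ι Q hQ K π hne hK (hcomp K hKc) hm hmul (fun x hx => continuous_le_rng hle (hc1 x hx))
    ?_ hnx ?_
  · intro s x hx V hV
    obtain ⟨N, hN, hNs⟩ := mem_nhdsWithin_iff_exists_mem_nhds_inter.1 (hc2 s x hx (hn _ hV))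
    obtain ⟨U, hU, hUs⟩ := htop x hx N hN
    refine (@mem_nhdsWithin_iff_exists_mem_nhds_inter X (weakTop ℝ X) _ _ _).2 ⟨U, hU, ?_⟩
    exact fun y hy => hNs ⟨hUs hy, hy.2⟩
  · intro x hx V hV
    obtain ⟨A, r, hr, hA⟩ := (hQ.mem_nhds_iff 0 V).1 (hn _ hV)
    have hN : (A.sup Q).ball x r ∈ 𝓝 x := (hQ.mem_nhds_iff x _).2 ⟨A, r, hr, Subset.rfl⟩
    obtain ⟨U, hU, hUs⟩ := htop x hx _ hN
    refine ⟨U, hU, fun s y hy => hA ?_⟩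
    have h1 := hUs hy
    rw [Seminorm.mem_ball] at h1
    rw [Seminorm.mem_ball, sub_zero]
    refine lt_of_le_of_lt (Seminorm.finset_sup_apply_le (apply_nonneg _ _) fun i hi => ?_) h1
    exact (hnx i s y hy.2 x hx).trans (Seminorm.le_finset_sup_apply hi)

/-- **Theorem**: `S` has property (D) if and only if `S` has property (E). -/
theorem propertyD_iff_propertyE
    {S : Type u} [Semigroup S] [TopologicalSpace S] [T2Space S]
    (hS : IsSemitopologicalSemigroup S) :
    PropertyD.{u, v} S ↔ PropertyE.{u, v} S :=
  ⟨E_of_D, D_of_E⟩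
end
end

section
/- Let K be a compact Hausdorff topological space and let S be a (discrete) semigroup of self-maps of K (no continuity of the maps is required) that is compact in the product topology of K^K. Suppose that every nonempty closed S-invariant subset of K contains a common fixed point of S, i.e., a point x with sx = x for all s ∈ S. Then there exists an element e ∈ S that is a retraction of K onto the fixed point set F(S) = {x ∈ K : sx = x for every s ∈ S}, i.e., e ∘ e = e, e(K) ⊆ F(S), and e(x) = x for every x ∈ F(S). -/
open Set

noncomputable section

universe u

/-- **Theorem (Bruck)**: Let `K` be a compact Hausdorff space and `S` a nonempty semigroup of
(not necessarily continuous) self-maps of `K` which is compact in the product topology of `K^K`.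
If every nonempty closed `S`-invariant subset of `K` contains a common fixed point of `S`, then
`S` contains a retraction `e` of `K` onto the fixed point set
`F(S) = {x ∈ K : s x = x for all s ∈ S}`. -/
theorem exists_retraction_of_compact_semigroup
    {K : Type u} [TopologicalSpace K] [CompactSpace K] [T2Space K]
    (S : Set (K → K)) (hSne : S.Nonempty)
    -- `S` is a semigroup of self-maps of `K`
    (hSmul : ∀ f ∈ S, ∀ g ∈ S, f ∘ g ∈ S)
    -- `S` is compact in the product topology of `K^K`
    (hScpt : IsCompact S)
    -- every nonempty closed `S`-invariant subset of `K` contains a common fixed point of `S`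
    (hfix : ∀ A : Set K, A.Nonempty → IsClosed A → (∀ f ∈ S, MapsTo f A A) →
      ∃ x ∈ A, ∀ f ∈ S, f x = x) :
    ∃ e ∈ S, e ∘ e = e ∧ (∀ x : K, ∀ f ∈ S, f (e x) = e x) ∧
      (∀ x : K, (∀ f ∈ S, f x = x) → e x = x) := by
  have hScl : IsClosed S := hScpt.isClosed
  obtain ⟨L, hL⟩ := zorn_superset
    {L : Set (K → K) | L ⊆ S ∧ L.Nonempty ∧ IsClosed L ∧ ∀ f ∈ S, ∀ g ∈ L, f ∘ g ∈ L} (by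
      intro c hc hchain
      rcases c.eq_empty_or_nonempty with rfl | hne
      · exact ⟨S, ⟨subset_rfl, hSne, hScl, hSmul⟩, by simp⟩
      · refine ⟨⋂₀ c, ⟨?_, ?_, ?_, ?_⟩, fun s hs => sInter_subset_of_mem hs⟩
        · obtain ⟨A, hA⟩ := hne
          exact (sInter_subset_of_mem hA).trans (hc hA).1
        · have : Nonempty c := hne.to_subtype
          refine IsCompact.nonempty_sInter_of_directed_nonempty_isCompact_isClosed
            (S := c) ?_ ?_ ?_ ?_
          · intro a ha b hb
            rcases hchain.total ha hb with h | h
            · exact ⟨a, ha, subset_rfl, h⟩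
            · exact ⟨b, hb, h, subset_rfl⟩
          · exact fun A hA => (hc hA).2.1
          · exact fun A hA => hScpt.of_isClosed_subset (hc hA).2.2.1 (hc hA).1
          · exact fun A hA => (hc hA).2.2.1
        · exact isClosed_sInter fun A hA => (hc hA).2.2.1
        · intro f hf g hg A hA
          exact (hc hA).2.2.2 f hf g (hg A hA))
  obtain ⟨hLS, ⟨e, heL⟩, hLcl, hLid⟩ := hL.prop
  have heS := hLS heL
  have key : ∀ x : K, ∀ f ∈ S, f (e x) = e x := by
    intro x
    obtain ⟨y, ⟨s, hs, rfl⟩, hy⟩ := hfix ((fun s : K → K => s (e x)) '' S) (hSne.image _)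
      (hScpt.image (continuous_apply (e x))).isClosed (by
        rintro f hf _ ⟨s, hs, rfl⟩
        exact ⟨f ∘ s, hSmul f hf s hs, rfl⟩)
    have hse : s ∘ e ∈ L := hLid s hs e heL
    have hcont : Continuous (fun t : K → K => t ∘ (s ∘ e)) :=
      continuous_pi fun z => continuous_apply ((s ∘ e) z)
    have hsub : (fun t : K → K => t ∘ (s ∘ e)) '' S ⊆ L := by
      rintro _ ⟨t, ht, rfl⟩
      exact hLid t ht _ hse
    have hle := hL.le_of_le (y := (fun t : K → K => t ∘ (s ∘ e)) '' S)
      ⟨hsub.trans hLS, hSne.image _, (hScpt.image hcont).isClosed, by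
        rintro f hf _ ⟨t, ht, rfl⟩
        exact ⟨f ∘ t, hSmul f hf t ht, rfl⟩⟩ hsub
    obtain ⟨t, ht, hte⟩ := hle heL
    have h1 : e x = s (e x) := by
      have h2 : t (s (e x)) = e x := congrFun hte x
      exact h2.symm.trans (hy t ht)
    intro f hf
    have := hy f hf
    simp only [← h1] at this
    exact this
  exact ⟨e, heS, funext fun x => key x e heS, key, fun x hx => hx e heS⟩
end
end

section
/- Let S be a semitopological semigroup that has property (G): every Q-nonexpansive dynamical system (S,(K,weak)), where K is a weakly compact convex subset of a Hausdorff locally convex space whose topology is determined by a family Q of seminorms, has a point x ∈ K with sx = x for all s ∈ S. Then for every such Q-nonexpansive dynamical system (S,(K,weak)) on a weakly compact convex set K, the fixed point set F(S) = {x ∈ K : sx = x for every s ∈ S} is a Q-nonexpansive retract of K, i.e., there exists a map r: K → K with r(K) ⊆ F(S), r ∘ r = r, r(x) = x for x ∈ F(S), and p(r(x) − r(y)) ≤ p(x − y) for all p ∈ Q and x, y ∈ K. -/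
open Set MeasureTheory BoundedContinuousFunction

noncomputable section

universe u v

/-- Property (G): every `Q`-nonexpansive dynamical system `(S,(K,weak))` on a nonempty weakly
compact convex subset of a Hausdorff locally convex space has a common fixed point. -/
def PropertyG (S : Type u) [Semigroup S] [TopologicalSpace S] : Prop :=
  ∀ (X : Type v) [AddCommGroup X] [Module ℝ X] [TopologicalSpace X] [T2Space X]
    (ι : Type v) [Nonempty ι] (Q : SeminormFamily ℝ X ι), WithSeminorms Q →
    ∀ (K : Set X) (π : S → X → X),
      K.Nonempty → Convex ℝ K → @IsCompact X (weakTop ℝ X) K →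
      (∀ s : S, MapsTo (π s) K K) →
      (∀ s t : S, ∀ x ∈ K, π (s * t) x = π s (π t x)) →
      (∀ x ∈ K, @Continuous S X _ (weakTop ℝ X) fun s => π s x) →
      (∀ s : S, @ContinuousOn X X (weakTop ℝ X) (weakTop ℝ X) (π s) K) →
      (∀ (i : ι) (s : S), ∀ x ∈ K, ∀ y ∈ K, Q i (π s x - π s y) ≤ Q i (x - y)) →
      ∃ x ∈ K, ∀ s : S, π s x = x

lemma continuous_weakTop_iff' {Y X : Type*} [tY : TopologicalSpace Y] [AddCommGroup X]
    [Module ℝ X] [TopologicalSpace X] (g : Y → X) :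
    @Continuous Y X tY (weakTop ℝ X) g ↔ ∀ φ : X →L[ℝ] ℝ, Continuous fun y => φ (g y) := by
  unfold weakTop
  rw [continuous_iInf_rng]
  exact forall_congr' fun φ => continuous_induced_rng

lemma continuous_weak_functional {X : Type*} [AddCommGroup X]
    [Module ℝ X] [TopologicalSpace X] (φ : X →L[ℝ] ℝ) :
    @Continuous X ℝ (weakTop ℝ X) _ φ := by
  letI := weakTop ℝ X
  exact continuous_iInf_dom (i := φ) continuous_induced_dom

lemma weakTop_pi {A X ι : Type*} [AddCommGroup X] [Module ℝ X] [TopologicalSpace X]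
    (Q : SeminormFamily ℝ X ι) (hQ : WithSeminorms Q) :
    weakTop ℝ (A → X) = @Pi.topologicalSpace A (fun _ => X) (fun _ => weakTop ℝ X) := by
  classical
  apply le_antisymm
  · rw [← continuous_id_iff_le]
    refine (@continuous_pi_iff (A → X) A (fun _ => X) (weakTop ℝ (A → X))
      (fun _ => weakTop ℝ X) id).2 fun a => ?_
    refine (@continuous_weakTop_iff' (A → X) X (weakTop ℝ (A → X)) _ _ _ _).2 fun φ => ?_
    exact continuous_weak_functional (φ.comp (ContinuousLinearMap.proj (R := ℝ) (φ := fun _ : A => X) a))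
  · rw [← continuous_id_iff_le]
    refine (@continuous_weakTop_iff' (A → X) (A → X)
      (@Pi.topologicalSpace A (fun _ => X) (fun _ => weakTop ℝ X)) _ _ _ _).2 fun φ => ?_
    have hP := withSeminorms_pi (𝕜 := ℝ) (fun _ : A => hQ)
    obtain ⟨s, C, -, hC⟩ := Seminorm.bound_of_continuous hP
      ((normSeminorm ℝ ℝ).comp φ.toLinearMap) (by
        change Continuous fun f => ‖φ f‖
        exact φ.continuous.norm)
    let T : Finset A := s.image Sigma.fst
    have h0 : ∀ f : A → X, (∀ a ∈ T, f a = 0) → φ f = 0 := by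
      intro f hf
      have h1 := hC f
      have h2 : (s.sup (SeminormFamily.sigma
          (fun i : A ↦ Q.comp (LinearMap.proj (R := ℝ) (φ := fun _ : A => X) i)))) f ≤ 0 := by
        refine Seminorm.finset_sup_apply_le le_rfl fun i hi => ?_
        have : f i.1 = 0 := hf _ (Finset.mem_image_of_mem _ hi)
        change Q i.2 (f i.1) ≤ 0
        simp [this]
      have h3 : ‖φ f‖ ≤ C * (s.sup (SeminormFamily.sigma
          (fun i : A ↦ Q.comp (LinearMap.proj (R := ℝ) (φ := fun _ : A => X) i)))) f := h1
      have h4 : ‖φ f‖ ≤ 0 := h3.trans (mul_nonpos_of_nonneg_of_nonpos C.2 h2)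
      simpa using h4
    have h1 : ∀ f : A → X, φ f = ∑ a ∈ T,
        (φ.comp (ContinuousLinearMap.single ℝ (fun _ : A => X) a)) (f a) := by
      intro f
      have : φ (f - ∑ a ∈ T, Pi.single a (f a)) = 0 := by
        apply h0
        intro b hb
        simp [Finset.sum_apply, Pi.single_apply, hb]
      rw [map_sub, sub_eq_zero, map_sum] at this
      simpa using this
    simp only [id, h1]
    letI : TopologicalSpace (A → X) := @Pi.topologicalSpace A (fun _ => X) (fun _ => weakTop ℝ X)
    refine continuous_finsetSum _ fun a _ => ?_
    exact @Continuous.comp (A → X) X ℝ _ (weakTop ℝ X) _ _ _ (continuous_weak_functional _)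
      (@continuous_apply A (fun _ => X) (fun _ => weakTop ℝ X) a)

lemma isClosed_weak {X : Type*} [AddCommGroup X] [Module ℝ X] [TopologicalSpace X]
    [IsTopologicalAddGroup X] [ContinuousSMul ℝ X] [LocallyConvexSpace ℝ X]
    (C : Set X) (hc : Convex ℝ C) (hcl : IsClosed C) : @IsClosed X (weakTop ℝ X) C := by
  have : C = ⋂ (p : (X →L[ℝ] ℝ) × ℝ) (_ : ∀ a ∈ C, p.1 a ≤ p.2), {x | p.1 x ≤ p.2} := by
    ext x
    simp only [mem_iInter, mem_ofPred_eq]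
    refine ⟨fun hx p hp => hp x hx, fun h => ?_⟩
    by_contra hx
    obtain ⟨f, u, h1, h2⟩ := geometric_hahn_banach_closed_point hc hcl hx
    exact absurd (h (f, u) fun a ha => (h1 a ha).le) (not_le.2 h2)
  rw [this]
  refine @isClosed_iInter _ _ (weakTop ℝ X) _ fun p =>
    @isClosed_iInter _ _ (weakTop ℝ X) _ fun _ => ?_
  exact @IsClosed.preimage _ _ (weakTop ℝ X) _ _ (continuous_weak_functional p.1) _
    (isClosed_Iic (a := p.2))

lemma t2_weak {X : Type*} [AddCommGroup X] [Module ℝ X] [TopologicalSpace X]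
    [IsTopologicalAddGroup X] [ContinuousSMul ℝ X] [LocallyConvexSpace ℝ X] [T2Space X] :
    @T2Space X (weakTop ℝ X) := by
  refine @T2Space.mk X (weakTop ℝ X) fun x y hxy => ?_
  obtain ⟨f, hf⟩ := SeparatingDual.exists_separating_of_ne (R := ℝ) hxy
  exact @separated_by_continuous X ℝ (weakTop ℝ X) _ _ f (continuous_weak_functional f) x y hf

lemma isCompact_aux {A Z J : Type*} [TopologicalSpace Z] [T2Space Z] (K : Set Z)
    (hK : IsCompact K) (F : Set A) (e : A → Z) (C : J → Set (A → Z))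
    (hC : ∀ j, IsClosed (C j)) :
    IsCompact {f : A → Z | (∀ a, f a ∈ K) ∧ (∀ a ∈ F, f a = e a) ∧ ∀ j, f ∈ C j} := by
  have h1 : IsCompact (Set.pi univ fun _ : A => K) := isCompact_univ_pi fun _ => hK
  have h2 : IsClosed {f : A → Z | (∀ a ∈ F, f a = e a) ∧ ∀ j, f ∈ C j} := by
    have : {f : A → Z | (∀ a ∈ F, f a = e a) ∧ ∀ j, f ∈ C j} =
      (⋂ a ∈ F, {f : A → Z | f a = e a}) ∩ ⋂ j, C j := by
      ext f; simp
    rw [this]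
    refine IsClosed.inter (isClosed_biInter fun a _ => ?_) (isClosed_iInter hC)
    exact isClosed_eq (continuous_apply a) continuous_const
  convert h1.inter_right h2 using 1
  ext f; simp

/-- **Theorem (q)**: if `S` has property (G), then for every `Q`-nonexpansive dynamical system
`(S,(K,weak))` on a nonempty weakly compact convex set the fixed point set
`F(S) = {x ∈ K : s x = x for all s ∈ S}` is a `Q`-nonexpansive retract of `K`. -/
theorem fixedPointSet_nonexpansive_retract_of_propertyG
    {S : Type u} [Semigroup S] [TopologicalSpace S] [T2Space S]
    (hS : IsSemitopologicalSemigroup S)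
    (hG : PropertyG.{u, v} S)
    {X : Type v} [AddCommGroup X] [Module ℝ X] [TopologicalSpace X] [T2Space X]
    {ι : Type v} [Nonempty ι] (Q : SeminormFamily ℝ X ι) (hQ : WithSeminorms Q)
    (K : Set X) (π : S → X → X)
    (hKne : K.Nonempty) (hKcv : Convex ℝ K) (hKcpt : @IsCompact X (weakTop ℝ X) K)
    (hinv : ∀ s : S, MapsTo (π s) K K)
    (hact : ∀ s t : S, ∀ x ∈ K, π (s * t) x = π s (π t x))
    (horb : ∀ x ∈ K, @Continuous S X _ (weakTop ℝ X) fun s => π s x)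
    (htra : ∀ s : S, @ContinuousOn X X (weakTop ℝ X) (weakTop ℝ X) (π s) K)
    (hne : ∀ (i : ι) (s : S), ∀ x ∈ K, ∀ y ∈ K, Q i (π s x - π s y) ≤ Q i (x - y)) :
    ∃ r : X → X,
      -- `r` maps `K` into the fixed point set `F(S)`
      (∀ x ∈ K, r x ∈ K ∧ ∀ s : S, π s (r x) = r x) ∧
      -- `r` is a retraction
      (∀ x ∈ K, r (r x) = r x) ∧
      (∀ x ∈ K, (∀ s : S, π s x = x) → r x = x) ∧
      -- `r` is `Q`-nonexpansive
      (∀ i : ι, ∀ x ∈ K, ∀ y ∈ K, Q i (r x - r y) ≤ Q i (x - y)) := by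
  classical
  have := hQ.topologicalAddGroup
  have := hQ.continuousSMul
  have := hQ.toLocallyConvexSpace
  have : Nonempty K := hKne.to_subtype
  have : Nonempty (Σ _ : K, ι) := ⟨⟨Classical.arbitrary K, Classical.arbitrary ι⟩⟩
  let F : Set K := {a | ∀ s, π s a = a}
  let C : (ι × K × K) → Set (K → X) := fun j => {f | Q j.1 (f j.2.1 - f j.2.2) ≤ Q j.1 (j.2.1 - j.2.2)}
  let R : Set (K → X) := {f | (∀ a, f a ∈ K) ∧ (∀ a ∈ F, f a = (a : X)) ∧ ∀ j, f ∈ C j}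
  have hpi : weakTop ℝ (K → X) = @Pi.topologicalSpace K (fun _ => X) (fun _ => weakTop ℝ X) :=
    weakTop_pi Q hQ
  have hCcl : ∀ j, @IsClosed (K → X) (weakTop ℝ (K → X)) (C j) := by
    intro j
    have hsub : Continuous fun f : K → X => Q j.1 (f j.2.1 - f j.2.2) :=
      (hQ.continuous_seminorm j.1).comp ((continuous_apply _).sub (continuous_apply _))
    have hP := withSeminorms_pi (𝕜 := ℝ) (fun _ : K => hQ)
    have := hP.toLocallyConvexSpace
    refine isClosed_weak _ ?_ (isClosed_le hsub continuous_const)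
    intro f hf g hg a b ha hb hab
    have hf' : Q j.1 (f j.2.1 - f j.2.2) ≤ Q j.1 (j.2.1 - j.2.2) := hf
    have hg' : Q j.1 (g j.2.1 - g j.2.2) ≤ Q j.1 (j.2.1 - j.2.2) := hg
    change Q j.1 ((a • f j.2.1 + b • g j.2.1) - (a • f j.2.2 + b • g j.2.2)) ≤ _
    have e : (a • f j.2.1 + b • g j.2.1) - (a • f j.2.2 + b • g j.2.2)
      = a • (f j.2.1 - f j.2.2) + b • (g j.2.1 - g j.2.2) := by module
    rw [e]
    refine (map_add_le_add _ _ _).trans ?_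
    rw [map_smul_eq_mul, map_smul_eq_mul, Real.norm_of_nonneg ha, Real.norm_of_nonneg hb]
    calc _ ≤ a * Q j.1 (j.2.1 - j.2.2) + b * Q j.1 (j.2.1 - j.2.2) := by gcongr
      _ = _ := by rw [← add_mul, hab, one_mul]
  have hCcv : ∀ j, Convex ℝ (C j) := by
    intro j f hf g hg a b ha hb hab
    have hf' : Q j.1 (f j.2.1 - f j.2.2) ≤ Q j.1 (j.2.1 - j.2.2) := hf
    have hg' : Q j.1 (g j.2.1 - g j.2.2) ≤ Q j.1 (j.2.1 - j.2.2) := hg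
    change Q j.1 ((a • f j.2.1 + b • g j.2.1) - (a • f j.2.2 + b • g j.2.2)) ≤ _
    have e : (a • f j.2.1 + b • g j.2.1) - (a • f j.2.2 + b • g j.2.2)
      = a • (f j.2.1 - f j.2.2) + b • (g j.2.1 - g j.2.2) := by module
    rw [e]
    refine (map_add_le_add _ _ _).trans ?_
    rw [map_smul_eq_mul, map_smul_eq_mul, Real.norm_of_nonneg ha, Real.norm_of_nonneg hb]
    calc _ ≤ a * Q j.1 (j.2.1 - j.2.2) + b * Q j.1 (j.2.1 - j.2.2) := by gcongr
      _ = _ := by rw [← add_mul, hab, one_mul]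
  have hRcpt : @IsCompact (K → X) (weakTop ℝ (K → X)) R := by
    rw [hpi] at hCcl ⊢
    exact @isCompact_aux K X _ (weakTop ℝ X) t2_weak K hKcpt F (fun a => a) C hCcl
  have hRne : R.Nonempty := ⟨fun a => a, fun a => a.2, fun _ _ => rfl, fun j => le_refl (Q j.1 _)⟩
  have hRcv : Convex ℝ R := by
    intro f hf g hg a b ha hb hab
    refine ⟨fun x => hKcv (hf.1 x) (hg.1 x) ha hb hab, fun x hx => ?_,
      fun j => hCcv j (hf.2.2 j) (hg.2.2 j) ha hb hab⟩
    change a • f x + b • g x = x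
    rw [hf.2.1 x hx, hg.2.1 x hx, ← add_smul, hab, one_smul]
  obtain ⟨f, hf, hfix⟩ := hG (K → X) (Σ _ : K, ι) _ (withSeminorms_pi (𝕜 := ℝ) (fun _ : K => hQ))
    R (fun s f a => π s (f a)) hRne hRcv hRcpt
    (by
      intro s f hf
      refine ⟨fun a => hinv s (hf.1 a), fun a ha => ?_, fun j => ?_⟩
      · change π s (f a) = a
        rw [hf.2.1 a ha]; exact ha s
      · exact (hne j.1 s _ (hf.1 _) _ (hf.1 _)).trans (hf.2.2 j))
    (by
      intro s t f hf
      funext a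
      exact hact s t _ (hf.1 a))
    (by
      intro f hf
      rw [hpi]
      exact (@continuous_pi_iff S K (fun _ => X) _ (fun _ => weakTop ℝ X) _).2
        fun a => horb _ (hf.1 a))
    (by
      intro s
      rw [hpi]
      refine (@continuousOn_pi (K → X) (@Pi.topologicalSpace K (fun _ => X) (fun _ => weakTop ℝ X)) K (fun _ => X) (fun _ => weakTop ℝ X) _ _).2 fun a => ?_
      letI := weakTop ℝ X
      exact ContinuousOn.comp (t := K) (g := π s) (f := fun f : K → X => f a) (htra s)
        (continuous_apply a).continuousOn (fun f hf => hf.1 a))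
    (by
      intro i s f hf g hg
      exact hne i.2 s _ (hf.1 i.1) _ (hg.1 i.1))
  have hfix' : ∀ s a, π s (f a) = f a := fun s a => congrFun (hfix s) a
  refine ⟨fun x => if h : x ∈ K then f ⟨x, h⟩ else x, ?_, ?_, ?_, ?_⟩
  · intro x hx
    simp only [hx, dif_pos]
    exact ⟨hf.1 _, fun s => hfix' s _⟩
  · intro x hx
    simp only [hx, dif_pos, hf.1]
    exact hf.2.1 ⟨f ⟨x, hx⟩, hf.1 _⟩ (fun s => hfix' s _)
  · intro x hx h
    simp only [hx, dif_pos]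
    exact hf.2.1 ⟨x, hx⟩ h
  · intro i x hx y hy
    simp only [hx, hy, dif_pos]
    exact hf.2.2 (i, ⟨x, hx⟩, ⟨y, hy⟩)
end
end
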